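/- arXiv:0811.3889 — 2 statements merged into one kernel-verified Lean document; each statement's English description precedes it below -/
import Mathlib

section
/- Let U : ℝ^d → [-∞,∞) be a multivariate utility function with dual function U*(x*) := sup_{x∈ℝ^d} { U(x) − ⟨x, x*⟩ }. Then U is asymptotically satiable if and only if 0 belongs to the closure of dom(U*) := {x* : U*(x*) < ∞}. -/
/-!
The closed set `K = cl (hypograph U)` is convex, and every notion in the theorem can be read off from
it. If `g` is a supergradient of `cl U` at `x`, then `U* (g) ≤ cl U (x) - ⟪x, g⟫`, which is finite once
`cl U (x) ≠ ⊤`; hence supergradients lie in `dom U*`, and satiability gives arbitrarily small ones.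
Finiteness of `cl U` holds because `K` would otherwise contain `C_U × ℝ`, whose interior is
nonempty, and a convex set has the same interior as its closure in finite dimension, so that
`U` itself would take the value `⊤` (`clFn_ne_top`).

Conversely, for a small `y ∈ dom U*` and `δ > 0`, the strongly concave problem of maximizing
`cl U (x) - ⟪x, y⟫ - δ/2 ‖x‖²` has a solution `x₀`, and first-order optimality says that
`y + δ x₀ ∈ ∂(cl U)(x₀)`. Comparing with any fixed competitor shows `δ ‖x₀‖² = O(1)`, so that
`δ x₀ → 0` as `δ → 0` (`exists_support`). Monotonicity of `U` makes every element of `dom U*`, in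
particular this supergradient, nonnegative (`nonneg_of_mem_effDomStar`).
-/

open Set Filter Topology
open scoped RealInnerProductSpace

noncomputable section

/-- Euclidean space `ℝ^d`. -/
abbrev Euc (d : ℕ) := EuclideanSpace ℝ (Fin d)

variable {d : ℕ}

/-- The hypograph of an `EReal`-valued function on `ℝ^d`. -/
def hypograph (U : Euc d → EReal) : Set (Euc d × ℝ) :=
  {p | (p.2 : EReal) ≤ U p.1}

/-- `U : ℝ^d → [-∞,∞)` is proper concave if its hypograph is convex, it never takes the
value `+∞`, and its effective domain is nonempty. -/
def ProperConcave (U : Euc d → EReal) : Prop :=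
  Convex ℝ (hypograph U) ∧ (∀ x, U x ≠ ⊤) ∧ (∃ x, U x ≠ ⊥)

/-- The effective domain `dom(U) = {x : U(x) > -∞}`. -/
def effDom (U : Euc d → EReal) : Set (Euc d) := {x | U x ≠ ⊥}

/-- A convex cone: `λC + μC ⊆ C` for all `λ, μ ≥ 0`. -/
def IsConvexCone (C : Set (Euc d)) : Prop :=
  ∀ a b : ℝ, 0 ≤ a → 0 ≤ b → ∀ x ∈ C, ∀ y ∈ C, a • x + b • y ∈ C

/-- The nonnegative orthant `ℝ^d_+`. -/
def posOrthant (d : ℕ) : Set (Euc d) := {x | ∀ i, 0 ≤ x i}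

/-- A multivariate utility function: a proper concave `U` whose support cone
`C_U := cl(dom U)` is a convex cone with `ℝ^d_+ ⊆ C_U ≠ ℝ^d`, and which is nondecreasing
with respect to the preorder induced by `C_U`. -/
def IsUtility (U : Euc d → EReal) : Prop :=
  ProperConcave U ∧ IsConvexCone (closure (effDom U)) ∧
    posOrthant d ⊆ closure (effDom U) ∧ closure (effDom U) ≠ univ ∧
    ∀ x x' : Euc d, x' - x ∈ closure (effDom U) → U x ≤ U x'

/-- The dual function `U*(x*) = sup_x { U(x) - ⟨x, x*⟩ }`. -/
def dualFn (U : Euc d → EReal) (y : Euc d) : EReal :=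
  ⨆ x : Euc d, U x - ((⟪x, y⟫ : ℝ) : EReal)

/-- The effective domain of the dual function, `dom(U*) = {x* : U*(x*) < ∞}`. -/
def effDomStar (U : Euc d → EReal) : Set (Euc d) := {y | dualFn U y ≠ ⊤}

/-- The superdifferential `∂U(x) = {x* : U(z) ≤ U(x) + ⟨z-x, x*⟩ ∀ z}`. -/
def superdiff (U : Euc d → EReal) (x : Euc d) : Set (Euc d) :=
  {g | ∀ z : Euc d, U z ≤ U x + ((⟪z - x, g⟫ : ℝ) : EReal)}

/-- The closure `cl(U)` of `U`: the function whose hypograph is the closure of the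
hypograph of `U`. -/
def clFn (U : Euc d → EReal) (x : Euc d) : EReal :=
  ⨆ r ∈ {r : ℝ | (x, r) ∈ closure (hypograph U)}, (r : EReal)

/-- `U` is asymptotically satiable: for every `ε > 0` there is `x` such that
`∂(cl U)(x) ∩ [0,ε)^d ≠ ∅`. -/
def AsympSatiable (U : Euc d → EReal) : Prop :=
  ∀ ε : ℝ, 0 < ε → ∃ x : Euc d, ∃ g ∈ superdiff (clFn U) x, ∀ i, 0 ≤ g i ∧ g i < ε

lemma mem_effDomStar_iff {U : Euc d → EReal} (htop : ∀ x, U x ≠ ⊤) (y : Euc d) :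
    y ∈ effDomStar U ↔ ∃ C : ℝ, ∀ p ∈ hypograph U, p.2 - ⟪p.1, y⟫ ≤ C := by
  constructor
  · intro hy
    refine ⟨(dualFn U y).toReal, fun p hp => ?_⟩
    have h1 : U p.1 - ((⟪p.1, y⟫ : ℝ) : EReal) ≤ dualFn U y :=
      le_iSup (fun x : Euc d => U x - ((⟪x, y⟫ : ℝ) : EReal)) p.1
    have h2 : dualFn U y ≤ ((dualFn U y).toReal : EReal) := EReal.le_coe_toReal hy
    have h3 : ((p.2 : EReal) - ((⟪p.1, y⟫ : ℝ) : EReal)) ≤ U p.1 - ((⟪p.1, y⟫ : ℝ) : EReal) :=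
      EReal.sub_le_sub hp le_rfl
    have h4 := (h3.trans h1).trans h2
    exact_mod_cast h4
  · rintro ⟨C, hC⟩
    have : dualFn U y ≤ (C : EReal) := by
      refine iSup_le fun x => ?_
      induction hx : U x with
      | bot => simp
      | top => exact absurd hx (htop x)
      | coe r =>
        have h : r - ⟪x, y⟫ ≤ C := hC (x, r) hx.ge
        exact_mod_cast h
    exact ne_top_of_le_ne_top (EReal.coe_ne_top C) this

lemma exists_mem_hypograph {U : Euc d → EReal} (h : ∃ x, U x ≠ ⊥) :
    ∃ p : Euc d × ℝ, p ∈ hypograph U := by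
  obtain ⟨x, hx⟩ := h
  exact ⟨(x, (U x).toReal), EReal.coe_toReal_le hx⟩

lemma le_clFn {U : Euc d → EReal} {p : Euc d × ℝ} (hp : p ∈ closure (hypograph U)) :
    (p.2 : EReal) ≤ clFn U p.1 :=
  le_iSup₂ (f := fun (r : ℝ) (_ : r ∈ {r : ℝ | (p.1, r) ∈ closure (hypograph U)}) => (r : EReal))
    p.2 hp

/-- Elements of `dom U*` are nonnegative: otherwise `U z - ⟪z, y⟫` would grow without bound as `z`
moves in the direction of a basis vector `eᵢ` with `yᵢ < 0`, along which `U` does not decrease. -/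
lemma nonneg_of_mem_effDomStar {U : Euc d → EReal} (hU : IsUtility U) {y : Euc d}
    (hy : y ∈ effDomStar U) (i : Fin d) : 0 ≤ y i := by
  obtain ⟨⟨-, htop, hne⟩, -, hpos, -, hmono⟩ := hU
  obtain ⟨C, hC⟩ := (mem_effDomStar_iff htop y).1 hy
  obtain ⟨⟨z, r⟩, hz⟩ := exists_mem_hypograph hne
  have key : ∀ t : ℝ, 0 ≤ t → r - (⟪z, y⟫ + t * y i) ≤ C := by
    intro t ht
    have hle : U z ≤ U (z + t • EuclideanSpace.single i (1 : ℝ)) := by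
      refine hmono _ _ (hpos fun j => ?_)
      simp only [add_sub_cancel_left, PiLp.smul_apply, smul_eq_mul, PiLp.single_apply]
      split_ifs <;> simp [ht]
    have := hC (z + t • EuclideanSpace.single i (1 : ℝ), r) (le_trans hz hle)
    simpa [inner_add_left, inner_smul_left, EuclideanSpace.inner_single_left] using this
  by_contra! hneg
  have h0 := key 0 le_rfl
  have h1 := key ((C - r + ⟪z, y⟫ + 1) / (-y i)) (div_nonneg (by linarith) (by linarith))
  have h2 : (C - r + ⟪z, y⟫ + 1) / (-y i) * y i = -(C - r + ⟪z, y⟫ + 1) := by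
    field_simp [hneg.ne]
  rw [h2] at h1
  linarith

/-- Nonemptiness of `interior (closure s)` is enough for it to coincide with `interior s`: it forces
`affineSpan ℝ s`, a closed subspace, to be the whole space, so that `s` has an interior point. -/
lemma interior_closure_subset {E : Type*} [NormedAddCommGroup E] [NormedSpace ℝ E]
    [FiniteDimensional ℝ E] {s : Set E} (hs : Convex ℝ s) : interior (closure s) ⊆ s := by
  rcases (interior (closure s)).eq_empty_or_nonempty with h | h
  · simp [h]
  have hspan : affineSpan ℝ s = ⊤ := by
    have h1 : closure s ⊆ (affineSpan ℝ s : Set E) :=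
      closure_minimal (subset_affineSpan ℝ s) (AffineSubspace.closed_of_finiteDimensional _)
    have h2 := isOpen_interior.affineSpan_eq_top h
    rw [eq_top_iff, ← h2]
    exact affineSpan_le.2 (interior_subset.trans h1)
  have hne := hs.interior_nonempty_iff_affineSpan_eq_top.2 hspan
  rw [hs.interior_closure_eq_interior_of_nonempty_interior hne]
  exact interior_subset

/-- The closure of a utility function never takes the value `⊤`. -/
lemma clFn_ne_top {U : Euc d → EReal} (hU : IsUtility U) (x : Euc d) : clFn U x ≠ ⊤ := by
  intro hx
  obtain ⟨⟨hconv, htop, -⟩, -, hpos, -, -⟩ := hU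
  have hcc := hconv.closure
  have hx' : ∀ r : ℝ, ∃ r' : ℝ, r < r' ∧ (x, r') ∈ closure (hypograph U) := by
    intro r
    have : (r : EReal) < clFn U x := hx ▸ EReal.coe_lt_top r
    obtain ⟨r', h⟩ := lt_iSup_iff.1 this
    obtain ⟨h', h⟩ := lt_iSup_iff.1 h
    exact ⟨r', by exact_mod_cast h, h'⟩
  have hdown : ∀ p ∈ closure (hypograph U), ∀ s ≤ p.2, (p.1, s) ∈ closure (hypograph U) := by
    intro p hp s hs
    have hmaps : MapsTo (fun q : Euc d × ℝ => (q.1, q.2 - (p.2 - s))) (hypograph U)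
        (hypograph U) := by
      intro q hq
      have hq' : (q.2 : EReal) ≤ U q.1 := hq
      exact le_trans (EReal.coe_le_coe_iff.2 (by linarith)) hq'
    have := hmaps.closure (by fun_prop) hp
    simpa using this
  have hline : ∀ r : ℝ, (x, r) ∈ closure (hypograph U) := by
    intro r
    obtain ⟨r', h, h'⟩ := hx' r
    exact hdown _ h' r h.le
  -- The whole vertical line above `x` lies in the closed convex set `cl (hypograph U)`, so the
  -- vertical direction is a recession direction.
  have hvert : ∀ z ∈ effDom U, ∀ t : ℝ, (z, t) ∈ closure (hypograph U) := by
    intro z hz t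
    have hzs : (z, (U z).toReal) ∈ closure (hypograph U) :=
      subset_closure (EReal.coe_toReal_le hz)
    set s := (U z).toReal
    have hlim : Tendsto (fun a : ℝ => (z + a • (x - z), t)) (𝓝[>] 0) (𝓝 (z, t)) := by
      have : Continuous fun a : ℝ => (z + a • (x - z), t) := by fun_prop
      have := this.tendsto 0
      simp only [zero_smul, add_zero] at this
      exact this.mono_left nhdsWithin_le_nhds
    refine isClosed_closure.mem_of_tendsto hlim ?_
    filter_upwards [Ioo_mem_nhdsGT (zero_lt_one' ℝ)] with a ha
    -- The height `s + (t - s) / a` above `x` makes the convex combination have height `t`.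
    have := hcc hzs (hline (s + (t - s) / a)) (sub_nonneg.2 ha.2.le) ha.1.le (by ring)
    convert this using 1
    refine Prod.ext ?_ ?_
    · simp only [Prod.smul_mk, Prod.mk_add_mk]
      module
    · have := ha.1.ne'
      simp only [Prod.smul_mk, Prod.mk_add_mk, smul_eq_mul]
      field_simp
      ring
  have hcyl : closure (effDom U) ×ˢ (univ : Set ℝ) ⊆ closure (hypograph U) := by
    have : effDom U ×ˢ (univ : Set ℝ) ⊆ closure (hypograph U) :=
      fun p hp => hvert p.1 hp.1 p.2
    have := closure_minimal this isClosed_closure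
    rwa [closure_prod_eq, closure_univ] at this
  have hopen : IsOpen {v : Euc d | ∀ i, 0 < v i} := by
    simp only [ofPred_forall]
    exact isOpen_iInter_of_finite fun i => isOpen_lt continuous_const (by fun_prop)
  let e : Euc d := WithLp.toLp 2 fun _ => 1
  have he : ∀ t : ℝ, (e, t) ∈ hypograph U := by
    intro t
    apply interior_closure_subset hconv
    have hsub : {v : Euc d | ∀ i, 0 < v i} ×ˢ (univ : Set ℝ) ⊆ closure (hypograph U) :=
      by
      rintro ⟨v, t⟩ ⟨hv : ∀ i, 0 < v i, -⟩
      exact hcyl ⟨hpos fun i => (hv i).le, mem_univ t⟩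
    exact interior_maximal hsub (hopen.prod isOpen_univ) ⟨fun i => by simp [e], mem_univ t⟩
  exact htop e (EReal.eq_top_iff_forall_lt _ |>.2 fun t =>
    lt_of_lt_of_le (EReal.coe_lt_coe_iff.2 (lt_add_one t)) (he (t + 1)))

/-- A closed convex set `K` in `ℝ^d × ℝ` lying below a hyperplane of slope `y` has a supporting
hyperplane of slope `y + δ x₀`, touching `K` above `x₀`, where `x₀` maximizes the objective
`r - ⟪x, y⟫ - δ/2 ‖x‖²` over `(x, r) ∈ K`. The last clause is the a priori bound on `x₀` obtained by
comparison with a competitor `q`. -/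
lemma exists_support {K : Set (Euc d × ℝ)} (hK : IsClosed K) (hconv : Convex ℝ K)
    {q : Euc d × ℝ} (hq : q ∈ K) {y : Euc d} {M : ℝ} (hM : ∀ p ∈ K, p.2 - ⟪p.1, y⟫ ≤ M)
    {δ : ℝ} (hδ : 0 < δ) :
    ∃ p₀ ∈ K, (∀ p ∈ K, p.2 ≤ p₀.2 + ⟪p.1 - p₀.1, y + δ • p₀.1⟫) ∧
      δ / 2 * ‖p₀.1‖ ^ 2 ≤ M - (q.2 - ⟪q.1, y⟫) + δ / 2 * ‖q.1‖ ^ 2 := by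
  let F : Euc d × ℝ → ℝ := fun p => p.2 - ⟪p.1, y⟫ - δ / 2 * ‖p.1‖ ^ 2
  have hF : Continuous F := by fun_prop
  let S : Set (Euc d × ℝ) := K ∩ {p | F q ≤ F p}
  have hSclosed : IsClosed S := hK.inter (isClosed_le continuous_const hF)
  have hS1 : ∀ p ∈ S, δ / 2 * ‖p.1‖ ^ 2 ≤ M - F q := by
    rintro p ⟨hp, hp'⟩
    have h1 := hM p hp
    have h2 : F q ≤ p.2 - ⟪p.1, y⟫ - δ / 2 * ‖p.1‖ ^ 2 := hp'
    linarith
  have hScompact : IsCompact S := by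
    refine Metric.isCompact_of_isClosed_isBounded hSclosed ?_
    set B : ℝ := 2 * (M - F q) / δ + 1
    have hB : ∀ p ∈ S, ‖p.1‖ ≤ B := by
      intro p hp
      have h1 := hS1 p hp
      have h2 : ‖p.1‖ ^ 2 ≤ 2 * (M - F q) / δ := by
        rw [le_div_iff₀ hδ]; linarith
      have : ‖p.1‖ ≤ ‖p.1‖ ^ 2 + 1 := by nlinarith [sq_nonneg (‖p.1‖ - 1), norm_nonneg p.1]
      linarith
    refine isBounded_iff_forall_norm_le.2 ⟨max B (|M| + |F q| + B * ‖y‖), fun p hp => ?_⟩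
    refine (max_le_max (hB p hp) ?_ : max ‖p.1‖ ‖p.2‖ ≤ _)
    have h1 := hM p hp.1
    have h2 : F q ≤ p.2 - ⟪p.1, y⟫ - δ / 2 * ‖p.1‖ ^ 2 := hp.2
    have h3 : 0 ≤ δ / 2 * ‖p.1‖ ^ 2 := by positivity
    have h4 := abs_le.1 (abs_real_inner_le_norm p.1 y)
    have h5 : ‖p.1‖ * ‖y‖ ≤ B * ‖y‖ := by gcongr; exact hB p hp
    rw [Real.norm_eq_abs, abs_le]
    constructor <;>
      linarith [h4.1, h4.2, neg_abs_le (F q), le_abs_self M, abs_nonneg M, abs_nonneg (F q)]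
  obtain ⟨p₀, hp₀, hmax⟩ := hScompact.exists_isMaxOn ⟨q, hq, le_refl (F q)⟩ hF.continuousOn
  have hmax' : ∀ p ∈ K, F p ≤ F p₀ := by
    intro p hp
    by_cases h : F q ≤ F p
    · exact hmax ⟨hp, h⟩
    · exact (not_le.1 h).le.trans hp₀.2
  refine ⟨p₀, hp₀.1, fun p hp => ?_, ?_⟩
  · -- Comparison of `p₀` with `p₀ + t (p - p₀)`, divided by `t`, gives the claim up to `O(t)`.
    have hstep : ∀ t ∈ Ioo (0 : ℝ) 1,
        p.2 ≤ p₀.2 + ⟪p.1 - p₀.1, y + δ • p₀.1⟫ + t * (δ / 2 * ‖p.1 - p₀.1‖ ^ 2) := by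
      intro t ht
      have hmem := hconv.add_smul_sub_mem hp₀.1 hp ⟨ht.1.le, ht.2.le⟩
      have h := hmax' _ hmem
      have hnorm : ‖p₀.1 + t • (p.1 - p₀.1)‖ ^ 2 =
          ‖p₀.1‖ ^ 2 + 2 * t * ⟪p.1 - p₀.1, p₀.1⟫ + t ^ 2 * ‖p.1 - p₀.1‖ ^ 2 := by
        rw [norm_add_sq_real, inner_smul_right, norm_smul, mul_pow, Real.norm_eq_abs, sq_abs,
          real_inner_comm]
        ring
      simp only [F, Prod.fst_add, Prod.snd_add, Prod.smul_fst, Prod.smul_snd, Prod.fst_sub,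
        Prod.snd_sub, hnorm, smul_eq_mul, inner_add_left, real_inner_smul_left] at h
      rw [inner_add_right, real_inner_smul_right]
      refine le_of_mul_le_mul_left ?_ ht.1
      linarith
    have hlim : Tendsto (fun t : ℝ => p₀.2 + ⟪p.1 - p₀.1, y + δ • p₀.1⟫ +
        t * (δ / 2 * ‖p.1 - p₀.1‖ ^ 2)) (𝓝[>] 0)
        (𝓝 (p₀.2 + ⟪p.1 - p₀.1, y + δ • p₀.1⟫)) := by
      refine tendsto_nhdsWithin_of_tendsto_nhds (Continuous.tendsto' (by fun_prop) _ _ (by simp))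
    refine ge_of_tendsto hlim ?_
    filter_upwards [Ioo_mem_nhdsGT (zero_lt_one' ℝ)] with t ht using hstep t ht
  · have := hS1 p₀ hp₀
    simp only [F] at this
    linarith

lemma mem_effDomStar_of_mem_superdiff {U : Euc d → EReal} (hU : IsUtility U) {x g : Euc d}
    (hg : g ∈ superdiff (clFn U) x) : g ∈ effDomStar U := by
  rw [mem_effDomStar_iff hU.1.2.1]
  have hle : ∀ p ∈ hypograph U, (p.2 : EReal) ≤ clFn U x + ((⟪p.1 - x, g⟫ : ℝ) : EReal) :=
    fun p hp => (le_clFn (subset_closure hp)).trans (hg p.1)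
  induction hx : clFn U x with
  | bot =>
    obtain ⟨p, hp⟩ := exists_mem_hypograph hU.1.2.2
    have := hle p hp
    rw [hx] at this
    exact absurd (le_bot_iff.1 (this.trans_eq (EReal.bot_add _))) (EReal.coe_ne_bot _)
  | top => exact absurd hx (clFn_ne_top hU x)
  | coe c =>
    refine ⟨c - ⟪x, g⟫, fun p hp => ?_⟩
    have := hle p hp
    rw [hx] at this
    have h : p.2 ≤ c + ⟪p.1 - x, g⟫ := EReal.coe_le_coe_iff.1 this
    rw [inner_sub_left] at h
    linarith

lemma norm_le_of_apply {ε : ℝ} (hε : 0 ≤ ε) {g : Euc d} (h : ∀ i, 0 ≤ g i ∧ g i < ε) :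
    ‖g‖ ≤ ε * √d := by
  rw [EuclideanSpace.norm_eq]
  refine Real.sqrt_le_iff.2 ⟨by positivity, ?_⟩
  rw [mul_pow, Real.sq_sqrt (by positivity)]
  calc ∑ i, ‖g i‖ ^ 2 ≤ ∑ _i : Fin d, ε ^ 2 := by
        refine Finset.sum_le_sum fun i _ => ?_
        rw [Real.norm_eq_abs, abs_of_nonneg (h i).1]
        exact pow_le_pow_left₀ (h i).1 (h i).2.le 2
    _ = ε ^ 2 * d := by simp [mul_comm]

/-- A utility function `U` is asymptotically satiable if and only if
`0 ∈ cl(dom U*)`. -/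
theorem asympSatiable_iff_zero_mem_closure_domStar
    (U : Euc d → EReal) (hU : IsUtility U) :
    AsympSatiable U ↔ (0 : Euc d) ∈ closure (effDomStar U) := by
  constructor
  · intro h
    rw [Metric.mem_closure_iff]
    intro ε hε
    have hd : (0 : ℝ) < √d + 1 := by positivity
    obtain ⟨x, g, hg, hg'⟩ := h (ε / (√d + 1)) (by positivity)
    refine ⟨g, mem_effDomStar_of_mem_superdiff hU hg, ?_⟩
    rw [dist_zero_left]
    refine (norm_le_of_apply (by positivity) hg').trans_lt ?_
    rw [div_mul_eq_mul_div, div_lt_iff₀ hd]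
    exact mul_lt_mul_of_pos_left (lt_add_one _) hε
  · intro h ε hε
    obtain ⟨y, hy, hyε⟩ := Metric.mem_closure_iff.1 h (ε / 2) (by positivity)
    rw [dist_zero_left] at hyε
    obtain ⟨M, hM⟩ := (mem_effDomStar_iff hU.1.2.1 y).1 hy
    obtain ⟨q, hq⟩ := exists_mem_hypograph hU.1.2.2
    have hM' : ∀ p ∈ closure (hypograph U), p.2 - ⟪p.1, y⟫ ≤ M :=
      fun p hp => closure_minimal (s := hypograph U) (t := {p | p.2 - ⟪p.1, y⟫ ≤ M}) hM
        (isClosed_le (by fun_prop) continuous_const) hp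
    set A := M - (q.2 - ⟪q.1, y⟫)
    have hA : 0 ≤ A := sub_nonneg.2 (hM q hq)
    set B := A + ‖q.1‖ ^ 2 + 1
    have hB : 0 < B := by positivity
    -- The size of `δ` is dictated by `‖δ x₀‖² = 2 δ (δ/2 ‖x₀‖²) ≤ 2 δ B`, valid for `δ ≤ 1`.
    set δ := min 1 (ε ^ 2 / (16 * B))
    have hδ : 0 < δ := by positivity
    have hδ1 : δ ≤ 1 := min_le_left _ _
    have hδ2 : δ * (16 * B) ≤ ε ^ 2 := (le_div_iff₀ (by positivity)).1 (min_le_right _ _)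
    obtain ⟨p₀, hp₀, hsup, hbound⟩ :=
      exists_support isClosed_closure hU.1.1.closure (subset_closure hq) hM' hδ
    have hgs : y + δ • p₀.1 ∈ superdiff (clFn U) p₀.1 := by
      intro z
      refine (iSup₂_le fun r hr => ?_).trans (add_le_add_left (le_clFn hp₀) _)
      exact EReal.coe_le_coe_iff.2 (hsup (z, r) hr)
    have hsmall : ‖δ • p₀.1‖ < ε / 2 := by
      refine lt_of_pow_lt_pow_left₀ 2 (by positivity) ?_
      rw [norm_smul, Real.norm_eq_abs, abs_of_pos hδ, mul_pow]
      have h1 : δ / 2 * ‖p₀.1‖ ^ 2 ≤ B := by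
        have : δ / 2 * ‖q.1‖ ^ 2 ≤ 1 * ‖q.1‖ ^ 2 := by gcongr; linarith
        simp only [B]
        linarith
      have h2 := mul_le_mul_of_nonneg_left h1 hδ.le
      have h3 : 0 < ε ^ 2 := by positivity
      nlinarith
    refine ⟨p₀.1, _, hgs, fun i =>
      ⟨nonneg_of_mem_effDomStar hU (mem_effDomStar_of_mem_superdiff hU hgs) i, ?_⟩⟩
    calc (y + δ • p₀.1) i ≤ ‖(y + δ • p₀.1) i‖ := le_abs_self _
      _ ≤ ‖y + δ • p₀.1‖ := PiLp.norm_apply_le _ i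
      _ ≤ ‖y‖ + ‖δ • p₀.1‖ := norm_add_le _ _
      _ < ε := by linarith
end
end

section
/- Let U : ℝ^d → [-∞,∞) be a utility function supported on ℝ^d_+, with dual function U*. If either (a) U is bounded from above, or (b) there exists a function ζ : (0,1] → [0,∞) such that U*(ε x*) ≤ ζ(ε) (max(U*(x*), 0) + 1) for all ε ∈ (0,1] and all x* ∈ int(ℝ^d_+) (the growth condition), then U is asymptotically satiable. -/
/-!
A maximiser of `r - ⟪x, g⟫` over the closed hypograph of `U` is a point at which `g` is a
supergradient of `cl U`. Let `𝟙` be the vector of ones. If `U x ≤ K + t ∑ xᵢ` for some `K`, then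
on the hypograph `r - ⟪x, 2t𝟙⟫ ≤ K - t ∑ xᵢ`, so (the hypograph lying over the orthant) the
superlevel sets are compact and `g = 2t𝟙` is a supergradient somewhere
(`exists_superdiff_of_bound`). It remains to have such a bound for every `t > 0`.

* If `U` is bounded above, this is immediate.
* In general, concavity and monotonicity alone give a bound with some slope `B`
  (`exists_linear_bound`), that is, `U*` is finite at every sufficiently large multiple of `𝟙`;
  the growth condition then makes `U*` finite at `t𝟙` for every `t > 0`.
-/

open Set Filter Topology
open scoped RealInnerProductSpace

noncomputable section

variable {d : ℕ}

/-- A utility function supported on `ℝ^d_+`: proper concave, `cl(dom U) = ℝ^d_+`, and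
nondecreasing with respect to the preorder induced by `ℝ^d_+`. -/
def SupportedOnOrthant (U : Euc d → EReal) : Prop :=
  ProperConcave U ∧ closure (effDom U) = posOrthant d ∧
    ∀ x x' : Euc d, x' - x ∈ posOrthant d → U x ≤ U x'

/-- `U` is multivariate risk averse:
`U(x) + U(x+z+z') ≤ U(x+z) + U(x+z')` for all `x` and all `z, z' ≥ 0`. -/
def MultivariateRiskAverse (U : Euc d → EReal) : Prop :=
  ∀ x : Euc d, ∀ z ∈ posOrthant d, ∀ z' ∈ posOrthant d,
    U x + U (x + z + z') ≤ U (x + z) + U (x + z')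

/-- `U` has decreasing marginals:
`U(x+z) - U(x) ≥ U(x'+z) - U(x')` whenever `x ∈ dom(U)`, `x' ≽ x` and `z ≥ 0`. -/
def DecreasingMarginals (U : Euc d → EReal) : Prop :=
  ∀ x ∈ effDom U, ∀ x' : Euc d, x' - x ∈ posOrthant d →
    ∀ z ∈ posOrthant d, U (x' + z) - U x' ≤ U (x + z) - U x

/-- The dual function `U*` satisfies the growth condition: there is `ζ : (0,1] → [0,∞)`
with `U*(ε x*) ≤ ζ(ε) (U*(x*)⁺ + 1)` for all `ε ∈ (0,1]` and `x* ∈ int(ℝ^d_+)`. -/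
def GrowthCondition (U : Euc d → EReal) : Prop :=
  ∃ ζ : ℝ → ℝ, (∀ ε ∈ Set.Ioc (0 : ℝ) 1, 0 ≤ ζ ε) ∧
    ∀ ε ∈ Set.Ioc (0 : ℝ) 1, ∀ y ∈ interior (posOrthant d),
      dualFn U (ε • y) ≤ (ζ ε : EReal) * (max (dualFn U y) 0 + 1)

/-- The vector of ones. -/
def onesVec (d : ℕ) : Euc d := WithLp.toLp 2 (fun _ => 1)

lemma inner_smul_onesVec (x : Euc d) (t : ℝ) : ⟪x, t • onesVec d⟫ = t * ∑ i, x i := by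
  rw [inner_smul_right]
  simp [onesVec, PiLp.inner_apply]

lemma norm_le_sum_of_nonneg (x : Euc d) (hx : ∀ i, 0 ≤ x i) : ‖x‖ ≤ ∑ i, x i := by
  rw [EuclideanSpace.norm_eq]
  apply Real.sqrt_le_iff.2
  refine ⟨Finset.sum_nonneg fun i _ => hx i, ?_⟩
  simp only [Real.norm_eq_abs, sq_abs]
  exact Finset.sum_sq_le_sq_sum_of_nonneg fun i _ => hx i

lemma isClosed_posOrthant : IsClosed (posOrthant d) := by
  have : posOrthant d = ⋂ i, {x : Euc d | 0 ≤ x i} := by ext; simp [posOrthant]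
  rw [this]
  exact isClosed_iInter fun i => isClosed_le continuous_const (by fun_prop)

lemma smul_onesVec_mem_interior {t : ℝ} (ht : 0 < t) :
    t • onesVec d ∈ interior (posOrthant d) := by
  have ho : IsOpen (⋂ i, {x : Euc d | 0 < x i}) :=
    isOpen_iInter_of_finite fun i => isOpen_lt continuous_const (by fun_prop)
  have hs : (⋂ i, {x : Euc d | 0 < x i}) ⊆ posOrthant d := by
    intro x hx i
    exact (mem_iInter.1 hx i).le
  refine interior_maximal hs ho (mem_iInter.2 fun i => ?_)
  simpa [onesVec] using ht

lemma SupportedOnOrthant.nonneg_of_mem {U : Euc d → EReal} (hU : SupportedOnOrthant U)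
    {x : Euc d} {r : ℝ} (h : (x, r) ∈ hypograph U) (i : Fin d) : 0 ≤ x i := by
  have hx : x ∈ closure (effDom U) := by
    refine subset_closure fun hb => ?_
    have h' : (r : EReal) ≤ U x := h
    rw [hb] at h'
    exact absurd (le_bot_iff.1 h') (EReal.coe_ne_bot r)
  rw [hU.2.1] at hx
  exact hx i

lemma SupportedOnOrthant.exists_mem {U : Euc d → EReal} (hU : SupportedOnOrthant U) :
    ∃ (p : Euc d) (u : ℝ), (p, u) ∈ hypograph U ∧ U p = u := by
  obtain ⟨p, hp⟩ := hU.1.2.2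
  have h := EReal.coe_toReal (hU.1.2.1 p) hp
  exact ⟨p, (U p).toReal, h.le, h.symm⟩

/-- Concavity and monotonicity force at most linear growth in `∑ xᵢ`: for `p ∈ dom U`, the point
`p + 𝟙` is the convex combination, with weight `1 / (2 + ∑ xᵢ)` on `x`, of `x` and a
point dominating `p`. -/
lemma exists_linear_bound {U : Euc d → EReal} (hU : SupportedOnOrthant U) :
    ∃ A B : ℝ, ∀ (x : Euc d) (r : ℝ), (x, r) ∈ hypograph U → r ≤ A + B * ∑ i, x i := by
  obtain ⟨p, u, hpu, -⟩ := hU.exists_mem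
  have hp := hU.nonneg_of_mem hpu
  have hle : U p ≤ U (p + onesVec d) := hU.2.2 _ _ (by intro i; simp [onesVec])
  have hbot : U (p + onesVec d) ≠ ⊥ := by
    intro hb
    have h' : (u : EReal) ≤ U (p + onesVec d) := le_trans hpu hle
    rw [hb] at h'
    exact absurd (le_bot_iff.1 h') (EReal.coe_ne_bot u)
  have hu0 := EReal.coe_toReal (hU.1.2.1 (p + onesVec d)) hbot
  set u0 := (U (p + onesVec d)).toReal
  refine ⟨2 * u0 - u, u0 - u, fun x r hxr => ?_⟩
  have hx := hU.nonneg_of_mem hxr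
  set s := ∑ i, x i with hs
  have hs0 : 0 ≤ s := Finset.sum_nonneg fun i _ => hx i
  have hxs : ∀ i, x i ≤ s := fun i =>
    Finset.single_le_sum (f := fun i => x i) (fun j _ => hx j) (Finset.mem_univ i)
  let w : Euc d := (1 + s)⁻¹ • ((2 + s) • (p + onesVec d) - x)
  have hw : (w, u) ∈ hypograph U := by
    have : U p ≤ U w := by
      refine hU.2.2 _ _ fun i => ?_
      have e : (w - p) i = (1 + s)⁻¹ * (p i + (2 + s) - x i) := by
        simp only [w, onesVec, PiLp.sub_apply, PiLp.smul_apply, PiLp.add_apply, smul_eq_mul]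
        field_simp
        ring
      rw [e]
      have := hp i
      have := hxs i
      exact mul_nonneg (by positivity) (by linarith)
    exact le_trans hpu this
  have hc : (2 + s)⁻¹ • (x, r) + ((1 + s) / (2 + s)) • (w, u) ∈ hypograph U :=
    hU.1.1 hxr hw (by positivity) (by positivity) (by field_simp; ring)
  have e : (2 + s)⁻¹ • x + ((1 + s) / (2 + s)) • w = p + onesVec d := by
    have h1 : (1 + s) ≠ 0 := by positivity
    have h2 : (2 + s) ≠ 0 := by positivity
    ext i
    simp only [w, PiLp.sub_apply, PiLp.smul_apply, PiLp.add_apply, smul_eq_mul]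
    field_simp
    ring
  have hc' : (((2 + s)⁻¹ * r + (1 + s) / (2 + s) * u : ℝ) : EReal)
      ≤ U ((2 + s)⁻¹ • x + ((1 + s) / (2 + s)) • w) := hc
  rw [e, ← hu0, EReal.coe_le_coe_iff] at hc'
  have h2 : 0 < 2 + s := by positivity
  have h3 : (2 + s)⁻¹ * r + (1 + s) / (2 + s) * u = (r + (1 + s) * u) / (2 + s) := by
    field_simp
  rw [h3, div_le_iff₀ h2] at hc'
  linarith

/-- If `U x ≤ K + t ∑ xᵢ` with `t > 0`, then `cl U - ⟪·, 2t𝟙⟫` attains its maximum. -/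
lemma exists_superdiff_of_bound {U : Euc d → EReal} (hU : SupportedOnOrthant U)
    {t K : ℝ} (ht : 0 < t)
    (hK : ∀ (x : Euc d) (r : ℝ), (x, r) ∈ hypograph U → r ≤ K + t * ∑ i, x i) :
    ∃ x, (2 * t) • onesVec d ∈ superdiff (clFn U) x := by
  obtain ⟨p, u, hpu, -⟩ := hU.exists_mem
  set C := closure (hypograph U) with hC
  have hCK : ∀ q ∈ C, (∀ i, 0 ≤ q.1 i) ∧ q.2 ≤ K + t * ∑ i, q.1 i := by
    have hcl : IsClosed {q : Euc d × ℝ | q.1 ∈ posOrthant d ∧ q.2 ≤ K + t * ∑ i, q.1 i} :=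
      (isClosed_posOrthant.preimage continuous_fst).inter
        (isClosed_le (f := fun q : Euc d × ℝ => q.2) (g := fun q => K + t * ∑ i, q.1 i)
          (by fun_prop) (by fun_prop))
    have hsub : hypograph U ⊆
        {q : Euc d × ℝ | q.1 ∈ posOrthant d ∧ q.2 ≤ K + t * ∑ i, q.1 i} :=
      fun q hq => ⟨hU.nonneg_of_mem hq, hK q.1 q.2 hq⟩
    exact fun q hq => closure_minimal hsub hcl hq
  let f : Euc d × ℝ → ℝ := fun q => q.2 - 2 * t * ∑ i, q.1 i
  have hf : Continuous f := by fun_prop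
  have hcomp : IsCompact (C ∩ {q | f (p, u) ≤ f q}) := by
    refine Metric.isCompact_of_isClosed_isBounded
      (isClosed_closure.inter (isClosed_le continuous_const hf)) ?_
    -- On the superlevel set, `t ∑ xᵢ ≤ K - f (p, u)` and `f (p, u) ≤ r ≤ K + t ∑ xᵢ`.
    set L := K - f (p, u) with hL
    refine (((Metric.isBounded_closedBall (x := (0 : Euc d)) (r := L / t)).prod
      (Metric.isBounded_Icc (f (p, u)) (K + L)))).subset ?_
    rintro ⟨x, r⟩ ⟨hq, hq2⟩
    obtain ⟨hx, hr⟩ := hCK _ hq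
    have hq2' : f (p, u) ≤ r - 2 * t * ∑ i, x i := hq2
    simp only at hx hr
    have hs0 : 0 ≤ ∑ i, x i := Finset.sum_nonneg fun i _ => hx i
    have hts : 0 ≤ t * ∑ i, x i := by positivity
    refine ⟨?_, ?_, ?_⟩
    · rw [mem_closedBall_zero_iff]
      refine (norm_le_sum_of_nonneg x hx).trans ?_
      rw [le_div_iff₀ ht]
      linarith
    · change f (p, u) ≤ r
      linarith
    · change r ≤ K + L
      linarith
  obtain ⟨⟨x, r⟩, ⟨hxC, hxL⟩, hmax⟩ :=
    hcomp.exists_isMaxOn ⟨(p, u), subset_closure hpu, le_refl (f (p, u))⟩ hf.continuousOn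
  refine ⟨x, fun z => iSup₂_le fun a ha => ?_⟩
  have hle : f (z, a) ≤ f (x, r) := by
    by_cases h : f (p, u) ≤ f (z, a)
    · exact hmax ⟨ha, h⟩
    · exact (not_le.1 h).le.trans hxL
  have hr : (r : EReal) ≤ clFn U x := le_iSup₂ (f := fun (r : ℝ)
    (_ : r ∈ {r : ℝ | (x, r) ∈ closure (hypograph U)}) => (r : EReal)) r hxC
  refine le_trans ?_ (add_le_add_left hr _)
  rw [← EReal.coe_add, EReal.coe_le_coe_iff, inner_sub_left, inner_smul_onesVec,
    inner_smul_onesVec]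
  simp only [f] at hle
  linarith

lemma bound_of_dualFn_le {U : Euc d → EReal} {t K : ℝ}
    (h : dualFn U (t • onesVec d) ≤ K) (x : Euc d) (r : ℝ) (hxr : (x, r) ∈ hypograph U) :
    r ≤ K + t * ∑ i, x i := by
  have h1 : (r : EReal) - ((⟪x, t • onesVec d⟫ : ℝ) : EReal) ≤ K :=
    (EReal.sub_le_sub hxr le_rfl).trans
      ((le_iSup (fun x => U x - ((⟪x, t • onesVec d⟫ : ℝ) : EReal)) x).trans h)
  rw [← EReal.coe_sub, EReal.coe_le_coe_iff, inner_smul_onesVec] at h1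
  linarith

lemma dualFn_le_of_bound {U : Euc d → EReal} (hU : SupportedOnOrthant U) {t K : ℝ}
    (h : ∀ (x : Euc d) (r : ℝ), (x, r) ∈ hypograph U → r ≤ K + t * ∑ i, x i) :
    dualFn U (t • onesVec d) ≤ K := by
  refine iSup_le fun x => ?_
  by_cases hb : U x = ⊥
  · simp [hb]
  have hx := EReal.coe_toReal (hU.1.2.1 x) hb
  have h1 := h x (U x).toReal hx.le
  rw [← hx, ← EReal.coe_sub, EReal.coe_le_coe_iff, inner_smul_onesVec]
  linarith

/-- Either hypothesis gives `U x ≤ K + t ∑ xᵢ` with arbitrarily small slope `t > 0`. -/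
lemma exists_bound {U : Euc d → EReal} (hU : SupportedOnOrthant U)
    (h : (∃ M : ℝ, ∀ x : Euc d, U x ≤ (M : EReal)) ∨ GrowthCondition U) {t : ℝ} (ht : 0 < t) :
    ∃ K : ℝ, ∀ (x : Euc d) (r : ℝ), (x, r) ∈ hypograph U → r ≤ K + t * ∑ i, x i := by
  rcases h with ⟨M, hM⟩ | ⟨ζ, hζ, hg⟩
  · refine ⟨M, fun x r hxr => ?_⟩
    have h1 : r ≤ M := EReal.coe_le_coe_iff.1 (le_trans hxr (hM x))
    have h2 : 0 ≤ ∑ i, x i := Finset.sum_nonneg fun i _ => hU.nonneg_of_mem hxr i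
    have : 0 ≤ t * ∑ i, x i := by positivity
    linarith
  · obtain ⟨A, B, hAB⟩ := exists_linear_bound hU
    -- A slope `b ≥ B` with `b ≥ t`, so that the scaling factor `t / b` lies in `(0, 1]`.
    set b := max B t with hb
    have hbt : t ≤ b := le_max_right _ _
    have hb0 : 0 < b := ht.trans_le hbt
    have hdual : dualFn U (b • onesVec d) ≤ A := by
      refine dualFn_le_of_bound hU fun x r hxr => (hAB x r hxr).trans ?_
      have h2 : 0 ≤ ∑ i, x i := Finset.sum_nonneg fun i _ => hU.nonneg_of_mem hxr i
      have := mul_le_mul_of_nonneg_right (le_max_left B t) h2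
      linarith
    have hmem : t / b ∈ Set.Ioc (0 : ℝ) 1 := ⟨by positivity, (div_le_one hb0).2 hbt⟩
    have h1 := hg _ hmem _ (smul_onesVec_mem_interior (d := d) hb0)
    rw [smul_smul, div_mul_cancel₀ _ hb0.ne'] at h1
    refine ⟨ζ (t / b) * (max A 0 + 1), bound_of_dualFn_le (h1.trans ?_)⟩
    have h2 : max (dualFn U (b • onesVec d)) 0 + 1 ≤ ((max A 0 + 1 : ℝ) : EReal) := by
      rw [EReal.coe_add, EReal.coe_one]
      refine add_le_add_left (max_le (hdual.trans ?_) ?_) 1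
      · exact EReal.coe_le_coe_iff.2 (le_max_left _ _)
      · exact EReal.coe_nonneg.2 (le_max_right _ _)
    rw [EReal.coe_mul]
    exact mul_le_mul_of_nonneg_left h2 (EReal.coe_nonneg.2 (hζ _ hmem))

/-- If a utility function supported on `ℝ^d_+` is bounded from above, or its dual
function satisfies the growth condition, then it is asymptotically satiable. -/
theorem asympSatiable_of_boundedAbove_or_growth
    (U : Euc d → EReal) (hU : SupportedOnOrthant U)
    (h : (∃ M : ℝ, ∀ x : Euc d, U x ≤ (M : EReal)) ∨ GrowthCondition U) :
    AsympSatiable U := by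
  intro ε hε
  -- The supergradient is `2t𝟙`, and `2t = ε / 2 < ε`.
  have ht : 0 < ε / 4 := by positivity
  obtain ⟨K, hK⟩ := exists_bound hU h ht
  obtain ⟨x, hx⟩ := exists_superdiff_of_bound hU ht hK
  refine ⟨x, _, hx, fun i => ?_⟩
  simp only [onesVec, PiLp.smul_apply, smul_eq_mul]
  constructor <;> linarith
end
end
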